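/- (Theorem 2, identity (20).) For every natural number k ≥ 1 and all real x, y: Σ_{n=0}^k (−1)^{k−n}·C(k,n)·L_{n,k−n}(−x,y) = (y + x)^k. -/

import Mathlib

/-!
Since `k.choose n * n! * (k - n)! = k!`, and since
`C(k, n + i) * C(n + i, n - s) = C(k, i + s) * C(k - i - s, n - s)`, the coefficient of `x ^ s * y ^ i`
in the sum over `n` is `k! / (i! * s!) * C(k, i + s)` times the alternating sum
`∑ n, (-1) ^ (k - n - i) * C(k - i - s, n - s) = (1 - 1) ^ (k - i - s)`.
Only the terms with `i + s = k` survive, and their coefficients `k! / (i! * s!)` are those of the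
binomial expansion of `(y + x) ^ k`.
-/

open Nat Finset

/-- Bivariate Laguerre polynomial. -/
noncomputable def lag2 (n m : ℕ) (x y : ℝ) : ℝ :=
  ∑ i ∈ Finset.range (m + 1), ∑ s ∈ Finset.range (n + 1),
    (n ! : ℝ) * (m ! : ℝ) / ((i ! : ℝ) * (s ! : ℝ)) * ((m + n).choose (m - i)) *
      ((n + i).choose (n - s)) * (-x) ^ s * (-y) ^ i

/-- The contribution of the `n`-th summand to the monomial `x ^ s * y ^ i`, extended by zero to all
indices so that the order of summation can be exchanged over fixed ranges. -/
noncomputable def lagTerm (k : ℕ) (x y : ℝ) (n i s : ℕ) : ℝ :=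
  if s ≤ n ∧ i + n ≤ k then
    (k ! : ℝ) / ((i ! : ℝ) * (s ! : ℝ)) * (k.choose (i + s)) * x ^ s * y ^ i *
      ((-1) ^ (k - n - i) * ((k - i - s).choose (n - s)))
  else 0

/-- Trinomial revision, in the form needed to separate the dependence on `n`. -/
lemma choose_mul_choose_shift {k n i s : ℕ} (hs : s ≤ n) (hi : i + n ≤ k) :
    k.choose (k - n - i) * (n + i).choose (n - s)
      = k.choose (i + s) * (k - i - s).choose (n - s) := by
  have h1 : k.choose (k - n - i) = k.choose (n + i) := by
    rw [← Nat.choose_symm (show n + i ≤ k by omega)]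
    congr 1
    omega
  have h2 : (n + i).choose (n - s) = (n + i).choose (i + s) := by
    rw [← Nat.choose_symm (show i + s ≤ n + i by omega)]
    congr 1
    omega
  have h3 : i + s ≤ n + i := by omega
  rw [h1, h2, Nat.choose_mul h3]
  congr 2 <;> omega

lemma summand_eq {k n : ℕ} (hn : n ≤ k) (x y : ℝ) :
    (-1 : ℝ) ^ (k - n) * (k.choose n : ℝ) * lag2 n (k - n) (-x) y
      = ∑ i ∈ range (k + 1), ∑ s ∈ range (k + 1), lagTerm k x y n i s := by
  have hsub : ∑ i ∈ range (k + 1), ∑ s ∈ range (k + 1), lagTerm k x y n i s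
      = ∑ i ∈ range (k - n + 1), ∑ s ∈ range (n + 1), lagTerm k x y n i s := by
    symm
    rw [Finset.sum_subset (range_mono (show k - n + 1 ≤ k + 1 by omega))]
    · refine Finset.sum_congr rfl fun i _ => ?_
      refine Finset.sum_subset (range_mono (by omega)) fun s _ h => ?_
      rw [mem_range] at h
      exact if_neg (by omega)
    · intro i _ h
      rw [mem_range] at h
      exact Finset.sum_eq_zero fun s _ => if_neg (by omega)
  rw [hsub, lag2, Finset.mul_sum]
  refine Finset.sum_congr rfl fun i hi => ?_
  rw [Finset.mul_sum]
  refine Finset.sum_congr rfl fun s hs => ?_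
  rw [mem_range] at hi hs
  rw [lagTerm, if_pos (by omega), neg_neg, Nat.sub_add_cancel hn]
  have hc : (k.choose (k - n - i) : ℝ) * (n + i).choose (n - s)
      = k.choose (i + s) * (k - i - s).choose (n - s) := by
    exact_mod_cast choose_mul_choose_shift (k := k) (n := n) (by omega) (by omega)
  have hf : (k.choose n : ℝ) * n ! * (k - n)! = k ! := by
    exact_mod_cast Nat.choose_mul_factorial_mul_factorial hn
  have hsg : (-1 : ℝ) ^ (k - n) * (-y) ^ i = (-1) ^ (k - n - i) * y ^ i := by
    obtain ⟨d, hd⟩ := Nat.exists_eq_add_of_le (show i ≤ k - n by omega)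
    rw [hd, Nat.add_sub_cancel_left, pow_add, neg_pow y]
    have : (-1 : ℝ) ^ i * (-1) ^ i = 1 := by rw [← mul_pow]; simp
    linear_combination (-1 : ℝ) ^ d * y ^ i * this
  calc _ = ((k.choose n : ℝ) * n ! * (k - n)!) / (i ! * s !)
        * ((k.choose (k - n - i) : ℝ) * (n + i).choose (n - s)) * x ^ s
        * ((-1 : ℝ) ^ (k - n) * (-y) ^ i) := by ring
    _ = _ := by rw [hc, hf, hsg]; ring

lemma sum_lagTerm (k i s : ℕ) (x y : ℝ) :
    ∑ n ∈ range (k + 1), lagTerm k x y n i s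
      = if i + s = k then (k ! : ℝ) / ((i ! : ℝ) * (s ! : ℝ)) * x ^ s * y ^ i else 0 := by
  by_cases h : i + s ≤ k
  · obtain ⟨d, rfl⟩ := Nat.exists_eq_add_of_le h
    -- Only the block `s ≤ n ≤ s + d` of the summation range contributes.
    rw [show i + s + d + 1 = s + ((d + 1) + i) by ring, sum_range_add, sum_range_add,
      Finset.sum_eq_zero (s := range s), Finset.sum_eq_zero (s := range i), zero_add, add_zero]
    · have halt : ∑ j ∈ range (d + 1), (-1 : ℝ) ^ (d - j) * (d.choose j) = 0 ^ d := by
        have := add_pow (1 : ℝ) (-1) d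
        simpa using this.symm
      calc _ = ∑ j ∈ range (d + 1), ((i + s + d)! : ℝ) / ((i ! : ℝ) * (s ! : ℝ))
            * ((i + s + d).choose (i + s)) * x ^ s * y ^ i
            * ((-1 : ℝ) ^ (d - j) * (d.choose j)) := by
            refine Finset.sum_congr rfl fun j hj => ?_
            rw [mem_range] at hj
            rw [lagTerm, if_pos (by omega), show i + s + d - (s + j) - i = d - j by omega,
              show i + s + d - i - s = d by omega, Nat.add_sub_cancel_left]
        _ = _ := by
            rw [← Finset.mul_sum, halt]
            rcases Nat.eq_zero_or_pos d with rfl | hd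
            · simp
            · rw [zero_pow (by omega), if_neg (by omega), mul_zero]
    · intro j _
      exact if_neg (by omega)
    · intro j hj
      rw [mem_range] at hj
      exact if_neg (by omega)
  · rw [if_neg (by omega)]
    exact Finset.sum_eq_zero fun n _ => if_neg (by omega)

theorem lag2_alternating_sum_neg (k : ℕ) (hk : 1 ≤ k) (x y : ℝ) :
    ∑ n ∈ Finset.range (k + 1), (-1 : ℝ) ^ (k - n) * (k.choose n : ℝ) * lag2 n (k - n) (-x) y
      = (y + x) ^ k := by
  rw [Finset.sum_congr rfl fun n hn => summand_eq (Nat.lt_succ_iff.mp (mem_range.mp hn)) x y,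
    Finset.sum_comm, add_pow]
  refine Finset.sum_congr rfl fun i hi => ?_
  rw [mem_range] at hi
  rw [Finset.sum_comm, Finset.sum_congr rfl fun s _ => sum_lagTerm k i s x y,
    Finset.sum_eq_single (k - i)]
  · rw [if_pos (by omega), Nat.cast_choose ℝ (show i ≤ k by omega)]
    ring
  · intro s _ hs
    exact if_neg (by omega)
  · intro h
    rw [mem_range] at h
    omega
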